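/- Let E(n) be the number of entries x of the n-th generation of the Calkin–Wilf tree such that, writing x = a/b in lowest terms, at least one of a, b is even, and let O(n) be the number of entries with both a and b odd. Then for every n ≥ 1, E(n) = (2^n + 2·(−1)^n)/3 and O(n) = (2^(n−1) + 2·(−1)^(n−1))/3. -/

import Mathlib

/-- The generations of the Calkin–Wilf tree: `CW 0 = [1/1]` is the first
generation, and each generation is obtained from the previous one by replacing
each entry `x` by `x/(x+1)` and `x+1`, in this order.  Thus the `n`-th
generation of the paper is `CW (n-1)`.  Every entry, as a `ℚ`, is automatically
in lowest terms `a/b = q.num / q.den` with `gcd(a,b) = 1`. -/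
def CW : ℕ → List ℚ
  | 0 => [1]
  | n + 1 => (CW n).flatMap (fun x => [x / (x + 1), x + 1])

/-!
An entry in lowest terms counted by `E(n)` has exactly one even term. The child `x + 1` has both
terms odd iff the numerator of `x` is even. Inversion swaps numerator and denominator and
conjugates `x ↦ x + 1` into `x ↦ x / (x + 1)`, so the other child has both terms odd iff the
denominator of `x` is even. Hence each entry counted by `E(n)` has exactly one child counted by
`O(n + 1)`, while the other entries have none, and `O(n + 1) = E(n) = 2 ^ (n - 1) - O(n)`.
-/

theorem countP_flatMap_eq_countP {α β : Type*} {p : β → Bool} {q : α → Bool} {f : α → List β}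
    {l : List α} (h : ∀ a ∈ l, (f a).countP p = if q a then 1 else 0) :
    (l.flatMap f).countP p = l.countP q := by
  induction l with
  | nil => rfl
  | cons a l ih =>
    rw [List.forall_mem_cons] at h
    rw [List.flatMap_cons, List.countP_append, List.countP_cons, h.1, ih h.2, add_comm]

theorem div_add_one_eq_inv_inv_add_one {K : Type*} [DivisionRing K] {x : K} (hx : x ≠ 0) :
    x / (x + 1) = (x⁻¹ + 1)⁻¹ := by
  rw [← inv_div, add_div, div_self hx, one_div, add_comm]

theorem add_intCast_num (q : ℚ) (n : ℤ) : (q + n).num = q.num + n * q.den := by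
  have h : ((q + n).num : ℚ) = q.num + n * q.den := by
    rw [← Rat.mul_den_eq_num (q + n), Rat.add_intCast_den, add_mul, Rat.mul_den_eq_num]
  exact_mod_cast h

section Parity

variable {q : ℚ}

theorem natAbs_num_inv (hq : q ≠ 0) : q⁻¹.num.natAbs = q.den := by
  rw [Rat.num_inv, Int.natAbs_mul, Int.natAbs_sign_of_ne_zero (Rat.num_ne_zero.mpr hq), one_mul,
    Int.natAbs_natCast]

theorem odd_den_of_even_num (h : Even q.num) : Odd q.den := by
  have h_dvd : 2 ∣ q.num.natAbs := (Int.natAbs_even.mpr h).two_dvd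
  exact Nat.coprime_two_left.mp (q.reduced.coprime_dvd_left h_dvd)

/-- The numerator and the denominator of the reduced fraction are both odd: the property counted
by `O(n)`. -/
def HasOddTerms (q : ℚ) : Prop := Odd q.num ∧ Odd q.den

instance : DecidablePred HasOddTerms :=
  fun q => inferInstanceAs (Decidable (Odd q.num ∧ Odd q.den))

theorem not_hasOddTerms_iff : ¬ HasOddTerms q ↔ Even q.num ∨ Even q.den := by
  rw [HasOddTerms, not_and_or, Int.not_odd_iff_even, Nat.not_odd_iff_even]

theorem even_num_inv_iff (hq : q ≠ 0) : Even q⁻¹.num ↔ Even q.den := by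
  rw [← Int.natAbs_even, natAbs_num_inv hq]

theorem hasOddTerms_inv_iff : HasOddTerms q⁻¹ ↔ HasOddTerms q := by
  rcases eq_or_ne q 0 with rfl | hq
  · rw [inv_zero]
  · rw [HasOddTerms, HasOddTerms, ← Int.natAbs_odd, natAbs_num_inv hq,
      Rat.den_inv_of_ne_zero hq, Int.natAbs_odd, and_comm]

theorem hasOddTerms_add_one_iff : HasOddTerms (q + 1) ↔ Even q.num := by
  have h_num : (q + 1).num = q.num + q.den := by
    simpa only [Int.cast_one, one_mul] using add_intCast_num q 1
  have h_den : (q + 1).den = q.den := mod_cast Rat.add_natCast_den q 1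
  rw [HasOddTerms, h_num, h_den]
  constructor
  · rintro ⟨h_sum, h_odd⟩
    exact (Int.odd_add'.mp h_sum).mp (Int.odd_coe_nat _ |>.mpr h_odd)
  · intro h_even
    have h_odd := odd_den_of_even_num h_even
    exact ⟨h_even.add_odd (Int.odd_coe_nat _ |>.mpr h_odd), h_odd⟩

-- At `q = -1` the quotient is `-1 / 0 = 0`, and both sides are false.
theorem hasOddTerms_div_add_one_iff : HasOddTerms (q / (q + 1)) ↔ Even q.den := by
  rcases eq_or_ne q 0 with rfl | hq
  · simp [HasOddTerms]
  · rw [div_add_one_eq_inv_inv_add_one hq, hasOddTerms_inv_iff, hasOddTerms_add_one_iff,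
      even_num_inv_iff hq]

theorem countP_hasOddTerms_children (q : ℚ) :
    [q / (q + 1), q + 1].countP (HasOddTerms ·) = if Even q.num ∨ Even q.den then 1 else 0 := by
  have h_excl : Even q.num → ¬ Even q.den :=
    fun h => Nat.not_even_iff_odd.mpr (odd_den_of_even_num h)
  simp only [List.countP_cons, List.countP_nil, decide_eq_true_eq, hasOddTerms_add_one_iff,
    hasOddTerms_div_add_one_iff]
  by_cases h_num : Even q.num
  · simp [h_num, h_excl h_num]
  · simp [h_num]

end Parity

theorem length_CW (n : ℕ) : (CW n).length = 2 ^ n := by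
  induction n with
  | zero => rfl
  | succ n ih => simp [CW, ih, pow_succ]

/-- The number `E(n + 1)` of entries of `CW n` with an even term; the index is that of `CW`. -/
def evenCount (n : ℕ) : ℕ := (CW n).countP (fun q => decide (Even q.num ∨ Even q.den))

/-- The number `O(n + 1)` of entries of `CW n` with both terms odd; the index is that of `CW`. -/
def oddCount (n : ℕ) : ℕ := (CW n).countP (HasOddTerms ·)

theorem oddCount_add_evenCount (n : ℕ) : oddCount n + evenCount n = 2 ^ n := by
  rw [← length_CW, List.length_eq_countP_add_countP (HasOddTerms ·), oddCount, evenCount]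
  simp only [decide_eq_true_eq, not_hasOddTerms_iff]

theorem oddCount_succ (n : ℕ) : oddCount (n + 1) = evenCount n :=
  countP_flatMap_eq_countP fun x _ => by
    simpa only [decide_eq_true_eq] using countP_hasOddTerms_children x

theorem oddCount_eq (n : ℕ) : (oddCount n : ℚ) = (2 ^ n + 2 * (-1 : ℚ) ^ n) / 3 := by
  induction n with
  | zero =>
    have h : oddCount 0 = 1 := by simp [oddCount, CW, HasOddTerms]
    norm_num [h]
  | succ n ih =>
    have h_total : (oddCount n + evenCount n : ℚ) = 2 ^ n := mod_cast oddCount_add_evenCount n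
    rw [oddCount_succ]
    linear_combination h_total - ih

theorem evenCount_eq (n : ℕ) :
    (evenCount n : ℚ) = (2 ^ (n + 1) + 2 * (-1 : ℚ) ^ (n + 1)) / 3 := by
  rw [← oddCount_succ, oddCount_eq]

/-- Let `E(n)` be the number of entries `a/b` (in lowest terms) of the `n`-th
generation of the Calkin–Wilf tree with at least one of `a`, `b` even, and
`O(n)` the number of entries with both `a` and `b` odd.  Then
`E(n) = (2^n + 2·(−1)^n)/3` and `O(n) = (2^(n−1) + 2·(−1)^(n−1))/3`. -/
theorem calkin_wilf_parity_count (n : ℕ) (hn : 1 ≤ n) :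
    (((CW (n - 1)).countP (fun q => decide (Even q.num ∨ Even q.den)) : ℚ) =
        (2 ^ n + 2 * (-1 : ℚ) ^ n) / 3) ∧
    (((CW (n - 1)).countP (fun q => decide (Odd q.num ∧ Odd q.den)) : ℚ) =
        (2 ^ (n - 1) + 2 * (-1 : ℚ) ^ (n - 1)) / 3) := by
  obtain ⟨m, rfl⟩ := Nat.exists_eq_add_of_le' hn
  rw [Nat.add_sub_cancel]
  exact ⟨evenCount_eq m, oddCount_eq m⟩
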